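/- arXiv:1805.11323 — 2 statements merged into one kernel-verified Lean document; each statement's English description precedes it below -/
import Mathlib

section
/- Fix z ∈ ℂ and generic tuples ū=(u_1,…,u_n), v̄=(v_1,…,v_m) in which u_n is regarded as a variable. As a function of u_n, K^{(z)}_{n,m}(ū | v̄) has at most a simple pole at u_n = v_m, and lim_{u_n → v_m} (u_n − v_m)·K^{(z)}_{n,m}(ū | v̄) = c·f(ū_n, v_m)·f(v_m, v̄_m)·K^{(z)}_{n−1,m−1}(ū_n | v̄_m); likewise lim_{u_n → v_m} (u_n − v_m)·\bar{K}^{(z)}_{n,m}(ū | v̄) = −c·f(v_m, ū_n)·f(v̄_m, v_m)·\bar{K}^{(z)}_{n−1,m−1}(ū_n | v̄_m). -/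
open scoped BigOperators

noncomputable section

/-- The rational function `g(u,v) = c/(u-v)`. -/
def gC (c u v : ℂ) : ℂ := c / (u - v)

/-- The rational function `f(u,v) = (u-v+c)/(u-v)`. -/
def fC (c u v : ℂ) : ℂ := (u - v + c) / (u - v)

/-- The rational function `h(u,v) = (u-v+c)/c`. -/
def hC (c u v : ℂ) : ℂ := (u - v + c) / c

/-- A family of parameters is generic if all pairwise differences avoid `0, ±c, ±2c`. -/
def Generic (c : ℂ) {ι : Type*} (w : ι → ℂ) : Prop :=
  ∀ i j, i ≠ j → w i - w j ≠ 0 ∧ w i - w j ≠ c ∧ w i - w j ≠ -c ∧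
    w i - w j ≠ 2 * c ∧ w i - w j ≠ -2 * c

/-- The modified Izergin determinant `K^{(z)}(x̄|ȳ)`. -/
def KIz (c z : ℂ) {ι κ : Type*} [Fintype ι] [Fintype κ] [DecidableEq κ]
    (x : ι → ℂ) (y : κ → ℂ) : ℂ :=
  Matrix.det (Matrix.of fun j k : κ =>
    -z * (if j = k then 1 else 0) +
      (∏ i, fC c (x i) (y j)) * (∏ i ∈ Finset.univ.erase j, fC c (y j) (y i))
        / hC c (y j) (y k))

/-- The conjugated modified Izergin determinant: `c` is replaced by `-c`. -/
def KIzBar (c z : ℂ) {ι κ : Type*} [Fintype ι] [Fintype κ] [DecidableEq κ]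
    (x : ι → ℂ) (y : κ → ℂ) : ℂ :=
  KIz (-c) z x y

/-- Restriction of a tuple to a subtuple indexed by a `Finset`. -/
def restr {p : ℕ} (w : Fin p → ℂ) (s : Finset (Fin p)) : {x // x ∈ s} → ℂ :=
  fun i => w i.1

/-- Double product `f(w̄_s, w̄_t)` over two subtuples of a tuple. -/
def fSS (c : ℂ) {p : ℕ} (w : Fin p → ℂ) (s t : Finset (Fin p)) : ℂ :=
  ∏ i ∈ s, ∏ j ∈ t, fC c (w i) (w j)

section aux
open Topology Filter

lemma aux_erase {κ : Type*} [Fintype κ] [DecidableEq κ] (j : κ) (g : κ → ℂ) :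
    ∏ i ∈ Finset.univ.erase j, g i = ∏ i, if i = j then 1 else g i := by
  rw [← Finset.mul_prod_erase Finset.univ _ (Finset.mem_univ j)]
  simp only [if_true, one_mul]
  refine Finset.prod_congr rfl fun i hi => ?_
  rw [if_neg (Finset.ne_of_mem_erase hi)]

/-- The blocks with the last row multiplied by `t - v0`, with the pole cancelled. -/
def auxG (c z : ℂ) {n m : ℕ} (u : Fin n → ℂ) (v : Fin m → ℂ) (v0 t : ℂ) :
    Matrix (Fin m ⊕ Fin 1) (Fin m ⊕ Fin 1) ℂ :=
  Matrix.fromBlocks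
    (Matrix.of fun j k => -z * (if j = k then 1 else 0) +
      ((∏ i, fC c (u i) (v j)) * fC c t (v j)) *
        ((∏ i ∈ Finset.univ.erase j, fC c (v j) (v i)) * fC c (v j) v0) / hC c (v j) (v k))
    (Matrix.of fun j _ =>
      ((∏ i, fC c (u i) (v j)) * fC c t (v j)) *
        ((∏ i ∈ Finset.univ.erase j, fC c (v j) (v i)) * fC c (v j) v0) / hC c (v j) v0)
    (Matrix.of fun _ k =>
      ((∏ i, fC c (u i) v0) * (t - v0 + c)) * (∏ i, fC c v0 (v i)) / hC c v0 (v k))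
    (Matrix.of fun _ _ => -z * (t - v0) +
      ((∏ i, fC c (u i) v0) * (t - v0 + c)) * (∏ i, fC c v0 (v i)) / hC c v0 v0)

lemma aux_eq (c z : ℂ) {n m : ℕ} (u : Fin n → ℂ) (v : Fin m → ℂ) (v0 t : ℂ) (ht : t ≠ v0) :
    (t - v0) * KIz c z (Fin.snoc u t : Fin (n+1) → ℂ) (Fin.snoc v v0 : Fin (m+1) → ℂ)
      = (auxG c z u v v0 t).det := by
  have h0 : t - v0 ≠ 0 := sub_ne_zero.mpr ht
  have hf : fC c t v0 = (t - v0 + c) / (t - v0) := rfl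
  unfold KIz
  rw [← Matrix.det_submatrix_equiv_self (finSumFinEquiv : Fin m ⊕ Fin 1 ≃ Fin (m+1))]
  have key := Matrix.det_mul_column (Sum.elim (fun _ : Fin m => (1:ℂ)) (fun _ : Fin 1 => t - v0))
  have hp : ∏ i, (Sum.elim (fun _ : Fin m => (1:ℂ)) (fun _ : Fin 1 => t - v0)) i = t - v0 := by
    simp
  rw [hp] at key
  rw [← key]
  congr 1
  have e1 : ∀ j : Fin m, (finSumFinEquiv (Sum.inl j) : Fin (m+1)) = Fin.castSucc j :=
    fun j => rfl
  have e2 : ∀ j : Fin 1, (finSumFinEquiv (Sum.inr j) : Fin (m+1)) = Fin.last m := by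
    intro j; ext; simp
  have ne1 : ∀ j : Fin m, Fin.castSucc j ≠ Fin.last m := fun j => (Fin.castSucc_lt_last j).ne
  have ne2 : ∀ j : Fin m, Fin.last m ≠ Fin.castSucc j := fun j => (Fin.castSucc_lt_last j).ne'
  ext a b
  rcases a with j | j <;> rcases b with k | k <;>
  simp only [auxG, Matrix.of_apply, Matrix.submatrix_apply, Matrix.fromBlocks_apply₁₁,
    Matrix.fromBlocks_apply₁₂, Matrix.fromBlocks_apply₂₁, Matrix.fromBlocks_apply₂₂,
    e1, e2, aux_erase, Fin.prod_univ_castSucc, Fin.snoc_castSucc, Fin.snoc_last, Sum.elim_inl,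
    Sum.elim_inr, one_mul, ne1, ne2, if_false, if_true, Fin.castSucc_inj, mul_one, mul_zero,
    zero_add, hf]
  · field_simp
  · field_simp

lemma aux_cont (c z : ℂ) {n m : ℕ} (u : Fin n → ℂ) (v : Fin m → ℂ) (v0 : ℂ)
    (hv : ∀ j, v0 - v j ≠ 0) :
    Tendsto (fun t => (auxG c z u v v0 t).det) (𝓝 v0) (𝓝 (auxG c z u v v0 v0).det) := by
  have hd : Continuous (fun M : Matrix (Fin m ⊕ Fin 1) (Fin m ⊕ Fin 1) ℂ => M.det) :=
    continuous_id.matrix_det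
  refine (hd.tendsto _).comp ?_
  have hf : ∀ j, ContinuousAt (fun t => fC c t (v j)) v0 := by
    intro j
    unfold fC
    exact ContinuousAt.div (by fun_prop) (by fun_prop) (hv j)
  refine tendsto_pi_nhds.mpr fun a => tendsto_pi_nhds.mpr fun b => ?_
  change ContinuousAt (fun t => auxG c z u v v0 t a b) v0
  rcases a with j | j <;> rcases b with k | k <;>
  simp only [auxG, Matrix.of_apply, Matrix.fromBlocks_apply₁₁,
    Matrix.fromBlocks_apply₁₂, Matrix.fromBlocks_apply₂₁, Matrix.fromBlocks_apply₂₂,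
    div_eq_mul_inv]
  · have := hf j
    fun_prop
  · have := hf j
    fun_prop
  · fun_prop
  · fun_prop

lemma aux_val (c : ℂ) (hc : c ≠ 0) (z : ℂ) {n m : ℕ} (u : Fin n → ℂ) (v : Fin m → ℂ) (v0 : ℂ)
    (h1 : ∀ j, v0 - v j ≠ 0) (h2 : ∀ j, v0 - v j + c ≠ 0) (h3 : ∀ j, v j - v0 + c ≠ 0)
    (h4 : ∀ j k, v j - v k + c ≠ 0) :
    (auxG c z u v v0 v0).det =
      c * (∏ i, fC c (u i) v0) * (∏ i, fC c v0 (v i)) * KIz c z u v := by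
  set R : ℂ := c * (∏ i, fC c (u i) v0) * (∏ i, fC c v0 (v i)) with hR
  set A : Fin m → ℂ := fun j => (∏ i, fC c (u i) (v j)) *
    (∏ i ∈ Finset.univ.erase j, fC c (v j) (v i)) with hA
  set F : Fin m → ℂ := fun j => fC c v0 (v j) * fC c (v j) v0 with hF
  let M11 : Matrix (Fin m) (Fin m) ℂ := Matrix.of fun j k =>
    -z * (if j = k then 1 else 0) + A j * F j / hC c (v j) (v k)
  let M12 : Matrix (Fin m) (Fin 1) ℂ := Matrix.of fun j _ => A j * F j / hC c (v j) v0
  let M21 : Matrix (Fin 1) (Fin m) ℂ := Matrix.of fun _ k => 1 / hC c v0 (v k)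
  have key := Matrix.det_mul_column (Sum.elim (fun _ : Fin m => (1:ℂ)) (fun _ : Fin 1 => R))
    (Matrix.fromBlocks M11 M12 M21 1)
  have hp : ∏ i, (Sum.elim (fun _ : Fin m => (1:ℂ)) (fun _ : Fin 1 => R)) i = R := by
    simp
  rw [hp, Matrix.det_fromBlocks_one₂₂] at key
  have hG : auxG c z u v v0 v0 = Matrix.of fun i j =>
      (Sum.elim (fun _ : Fin m => (1:ℂ)) (fun _ : Fin 1 => R)) i *
        (Matrix.fromBlocks M11 M12 M21 1) i j := by
    ext a b
    rcases a with j | j <;> rcases b with k | k <;>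
    simp only [auxG, M11, M12, M21, Matrix.of_apply, Matrix.fromBlocks_apply₁₁,
      Matrix.fromBlocks_apply₁₂, Matrix.fromBlocks_apply₂₁, Matrix.fromBlocks_apply₂₂,
      Sum.elim_inl, Sum.elim_inr, one_mul, hA, hF, hR, sub_self, zero_add, mul_zero]
    · ring
    · ring
    · ring
    · have : hC c v0 v0 = 1 := by unfold hC; field_simp; ring
      rw [this, Subsingleton.elim j k, Matrix.one_apply_eq]
      ring
  rw [hG, key]
  congr 1
  unfold KIz
  set N : Matrix (Fin m) (Fin m) ℂ := Matrix.of fun j k : Fin m =>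
    -z * (if j = k then 1 else 0) +
      (∏ i, fC c (u i) (v j)) * (∏ i ∈ Finset.univ.erase j, fC c (v j) (v i))
        / hC c (v j) (v k) with hN
  set d : Fin m → ℂ := fun j => fC c v0 (v j) with hd
  have hd0 : ∀ j, d j ≠ 0 := fun j => div_ne_zero (h2 j) (h1 j)
  have hm : M11 - M12 * M21 = Matrix.of fun i j => d i * (Matrix.of fun i j => (d j)⁻¹ * N i j) i j := by
    ext j k
    have hA' : (∏ i, fC c (u i) (v j)) * (∏ i ∈ Finset.univ.erase j, fC c (v j) (v i)) = A j := rfl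
    simp only [M11, M12, M21, Matrix.sub_apply, Matrix.mul_apply, Matrix.of_apply, hN,
      Finset.univ_unique, Finset.sum_singleton, hA']
    have hkey : F j / hC c (v j) (v k) - F j / hC c (v j) v0 * (1 / hC c v0 (v k)) =
        d j * (d k)⁻¹ / hC c (v j) (v k) := by
      have a1 := h1 j
      have a2 := h1 k
      have a3 := h2 j
      have a4 := h2 k
      have a5 := h3 j
      have a6 := h4 j k
      have a7 : v j - v0 ≠ 0 := by
        intro h; apply a1; linear_combination -h
      simp only [hF, hd, fC, hC]
      field_simp
      ring
    have hz : d j * (d k)⁻¹ * (-z * (if j = k then 1 else 0)) = -z * (if j = k then 1 else 0) := by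
      split_ifs with h
      · subst h
        rw [mul_inv_cancel₀ (hd0 j), one_mul]
      · simp
    linear_combination A j * hkey - hz
  rw [hm, Matrix.det_mul_column, Matrix.det_mul_row, ← mul_assoc, ← Finset.prod_mul_distrib]
  simp [hd0]

lemma aux_main (c : ℂ) (hc : c ≠ 0) (z : ℂ) {n m : ℕ} (u : Fin n → ℂ) (v : Fin m → ℂ) (v0 : ℂ)
    (h1 : ∀ j, v0 - v j ≠ 0) (h2 : ∀ j, v0 - v j + c ≠ 0) (h3 : ∀ j, v j - v0 + c ≠ 0)
    (h4 : ∀ j k, v j - v k + c ≠ 0) :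
    Tendsto (fun t => (t - v0) * KIz c z (Fin.snoc u t : Fin (n+1) → ℂ)
        (Fin.snoc v v0 : Fin (m+1) → ℂ)) (𝓝[≠] v0)
      (𝓝 (c * (∏ i, fC c (u i) v0) * (∏ i, fC c v0 (v i)) * KIz c z u v)) := by
  rw [← aux_val c hc z u v v0 h1 h2 h3 h4]
  refine ((aux_cont c z u v v0 h1).mono_left nhdsWithin_le_nhds).congr' ?_
  filter_upwards [self_mem_nhdsWithin] with t ht
  exact (aux_eq c z u v v0 t ht).symm

lemma aux_neg (c x y : ℂ) : fC (-c) x y = fC c y x := by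
  unfold fC
  rw [← neg_div_neg_eq]
  congr 1 <;> ring

end aux

open Topology Filter

/-- Residue of the modified Izergin determinant at the simple pole `uₙ = vₘ`.
Here `u` is the tuple `ū` with its last entry removed (the last entry is the
variable `t`), `v` is `v̄` with its last entry `v0` removed. -/
theorem stmt15
    (c : ℂ) (hc : c ≠ 0) (z : ℂ) (n m : ℕ)
    (u : Fin n → ℂ) (v : Fin m → ℂ) (v0 : ℂ)
    (hgen : Generic c (Fin.append u (Fin.snoc v v0))) :
    Tendsto (fun t => (t - v0) * KIz c z (Fin.snoc u t) (Fin.snoc v v0))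
        (𝓝[≠] v0)
        (𝓝 (c * (∏ i, fC c (u i) v0) * (∏ i, fC c v0 (v i)) * KIz c z u v)) ∧
      Tendsto (fun t => (t - v0) * KIzBar c z (Fin.snoc u t) (Fin.snoc v v0))
        (𝓝[≠] v0)
        (𝓝 (-c * (∏ i, fC c v0 (u i)) * (∏ i, fC c (v i) v0) * KIzBar c z u v)) := by
  have g1 : ∀ j, v0 - v j ≠ 0 ∧ v0 - v j ≠ c ∧ v0 - v j ≠ -c := by
    intro j
    have h := hgen (Fin.natAdd n (Fin.last m)) (Fin.natAdd n (Fin.castSucc j))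
      (fun h => (Fin.castSucc_lt_last j).ne' (Fin.natAdd_injective _ _ h))
    simp only [Fin.append_right, Fin.snoc_last, Fin.snoc_castSucc] at h
    exact ⟨h.1, h.2.1, h.2.2.1⟩
  have g2 : ∀ j k, v j - v k ≠ c ∧ v j - v k ≠ -c := by
    intro j k
    by_cases hjk : j = k
    · subst hjk
      rw [sub_self]
      exact ⟨hc.symm, (neg_ne_zero.mpr hc).symm⟩
    have h := hgen (Fin.natAdd n (Fin.castSucc j)) (Fin.natAdd n (Fin.castSucc k))
      (fun h => hjk (Fin.castSucc_injective _ (Fin.natAdd_injective _ _ h)))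
    simp only [Fin.append_right, Fin.snoc_castSucc] at h
    exact ⟨h.2.1, h.2.2.1⟩
  constructor
  · exact aux_main c hc z u v v0 (fun j => (g1 j).1)
      (fun j h => (g1 j).2.2 (by linear_combination h))
      (fun j h => (g1 j).2.1 (by linear_combination -h))
      (fun j k h => (g2 j k).2 (by linear_combination h))
  · have := aux_main (-c) (neg_ne_zero.mpr hc) z u v v0 (fun j => (g1 j).1)
      (fun j h => (g1 j).2.1 (by linear_combination h))
      (fun j h => (g1 j).2.2 (by linear_combination -h))
      (fun j k h => (g2 j k).1 (by linear_combination h))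
    simp only [aux_neg] at this
    exact this
end
end

section
/- For all z_1, z_2 ∈ ℂ and generic tuples ξ̄ (length l), ū (length n), v̄ (length m): Σ_{ξ̄ ⇒ {ξ̄_I, ξ̄_II}} z_2^{#ξ̄_I}·K^{(z_1)}_{n,#ξ̄_I}(ū | ξ̄_I)·K^{(z_2)}_{m,#ξ̄_II}(v̄ | ξ̄_II)·f(ξ̄_II, ξ̄_I)·f(ū, ξ̄_II) = K^{(z_1 z_2)}_{n+m,l}({ū, v̄} | ξ̄), and Σ_{ξ̄ ⇒ {ξ̄_I, ξ̄_II}} z_2^{#ξ̄_I}·\bar{K}^{(z_1)}_{n,#ξ̄_I}(ū | ξ̄_I)·\bar{K}^{(z_2)}_{m,#ξ̄_II}(v̄ | ξ̄_II)·f(ξ̄_I, ξ̄_II)·f(ξ̄_II, ū) = \bar{K}^{(z_1 z_2)}_{n+m,l}({ū, v̄} | ξ̄), where the sums run over all partitions of ξ̄ into two disjoint subtuples and {ū, v̄} denotes the concatenated (n+m)-tuple. -/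
open scoped BigOperators

noncomputable section

/-- Non-degeneracy of a family of parameters: what genericity gives. -/
def Good (c : ℂ) {κ : Type*} (y : κ → ℂ) : Prop :=
  ∀ i j, i ≠ j → y i - y j ≠ 0 ∧ y i - y j + c ≠ 0

/-- The Cauchy determinant, by induction with Schur complements. -/
lemma cauchy_aux (c : ℂ) (hc : c ≠ 0) (n : Type) [Fintype n] :
    ∀ [DecidableEq n] (y : n → ℂ), Good c y →
      Matrix.det (Matrix.of fun j k : n => 1 / hC c (y j) (y k)) =
        ∏ j, ∏ k, if j = k then 1 else (fC c (y j) (y k))⁻¹ := by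
  refine Fintype.induction_empty_option (P := fun (n : Type) _ =>
    ∀ [DecidableEq n] (y : n → ℂ), Good c y →
      Matrix.det (Matrix.of fun j k : n => 1 / hC c (y j) (y k)) =
        ∏ j, ∏ k, if j = k then 1 else (fC c (y j) (y k))⁻¹) ?_ ?_ ?_ n
  · intro α β _ e ih _ y hy
    classical
    letI := Fintype.ofEquiv β e.symm
    have h := ih (y ∘ e) (fun i j hij => hy (e i) (e j) (by simpa using hij))
    rw [← Matrix.det_submatrix_equiv_self e]
    refine (Eq.trans ?_ h).trans ?_
    · congr 1
    · rw [← e.prod_comp]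
      refine Finset.prod_congr (by ext; simp) fun j _ => ?_
      rw [← e.prod_comp]
      refine Finset.prod_congr (by ext; simp) fun k _ => ?_
      simp
  · intro _ y _
    simp
  · intro α _ ih _ y hy
    classical
    have hs : Good c (fun i => y (some i)) := fun i j hij => hy _ _ (by simpa using hij)
    have h := ih (fun i => y (some i)) hs
    rw [← Matrix.det_submatrix_equiv_self (Equiv.optionEquivSumPUnit.{0} α).symm]
    have hb : (Matrix.of fun j k : Option α => 1 / hC c (y j) (y k)).submatrix
        (Equiv.optionEquivSumPUnit.{0} α).symm (Equiv.optionEquivSumPUnit.{0} α).symm =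
        Matrix.fromBlocks (Matrix.of fun j k : α => 1 / hC c (y (some j)) (y (some k)))
          (Matrix.of fun (j : α) (_ : PUnit.{1}) => 1 / hC c (y (some j)) (y none))
          (Matrix.of fun (_ : PUnit.{1}) (k : α) => 1 / hC c (y none) (y (some k))) 1 := by
      ext (i | i) (j | j) <;> simp [hC, hc]
    rw [hb, Matrix.det_fromBlocks_one₂₂]
    have hS : (Matrix.of fun j k : α => 1 / hC c (y (some j)) (y (some k))) -
          (Matrix.of fun (j : α) (_ : PUnit.{1}) => 1 / hC c (y (some j)) (y none)) *
          (Matrix.of fun (_ : PUnit.{1}) (k : α) => 1 / hC c (y none) (y (some k))) =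
        Matrix.of fun j k => (fC c (y (some j)) (y none))⁻¹ *
          (Matrix.of fun j k => (fC c (y none) (y (some k)))⁻¹ *
            (Matrix.of fun j k : α => 1 / hC c (y (some j)) (y (some k))) j k) j k := by
      ext j k
      have h1 := hy (some j) none (by simp)
      have h2 := hy none (some k) (by simp)
      have h3 : y (some j) - y (some k) + c ≠ 0 := by
        by_cases hjk : j = k
        · simp [hjk, hc]
        · exact (hy (some j) (some k) (by simpa using hjk)).2
      obtain ⟨h1a, h1b⟩ := h1
      obtain ⟨h2a, h2b⟩ := h2
      simp only [Matrix.sub_apply, Matrix.mul_apply, Matrix.of_apply, hC, fC,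
        Finset.univ_unique, Finset.sum_singleton]
      field_simp
      ring
    rw [hS, Matrix.det_mul_column, Matrix.det_mul_row, h]
    simp only [Fintype.prod_option, Finset.prod_mul_distrib]
    simp

lemma cauchy_fin (c : ℂ) (hc : c ≠ 0) {n : Type} [Fintype n] [DecidableEq n]
    (y : n → ℂ) (hy : Good c y) (S : Finset n) :
    (∏ j ∈ S, ∏ k ∈ S.erase j, fC c (y j) (y k)) *
    ((Matrix.of fun j k : n => 1 / hC c (y j) (y k)).submatrix (↑) (↑) : Matrix S S ℂ).det
      = 1 := by
  have hs : Good c (fun i : S => y i) := fun i j hij =>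
    hy _ _ (fun e => hij (Subtype.ext e))
  have h := cauchy_aux c hc S (fun i : S => y i) hs
  have h' : ((Matrix.of fun j k : n => 1 / hC c (y j) (y k)).submatrix (↑) (↑) :
      Matrix S S ℂ) = Matrix.of fun j k : S => 1 / hC c (y j) (y k) := rfl
  rw [h', h, ← Finset.prod_coe_sort S, ← Finset.prod_mul_distrib]
  refine Finset.prod_eq_one fun j _ => ?_
  have : ∏ k : S, (if j = k then 1 else (fC c (y j) (y k))⁻¹) =
      ∏ k ∈ S, (if (j : n) = k then 1 else (fC c (y j) (y k))⁻¹) := by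
    rw [← Finset.prod_coe_sort S]
    refine Finset.prod_congr rfl fun k _ => ?_
    by_cases hjk : j = k
    · rw [if_pos hjk, if_pos (congrArg Subtype.val hjk)]
    · rw [if_neg hjk, if_neg (fun e => hjk (Subtype.ext e))]
  rw [this, ← Finset.mul_prod_erase S _ j.2, if_pos rfl, one_mul, ← Finset.prod_mul_distrib]
  refine Finset.prod_eq_one fun k hk => ?_
  have hne : (j : n) ≠ k := fun e => by simp [e] at hk
  rw [if_neg hne, mul_inv_cancel₀]
  exact div_ne_zero (hy _ _ hne).2 (hy _ _ hne).1

/-- Expansion of the modified Izergin determinant over subsets. -/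
lemma KIz_expand (c : ℂ) (hc : c ≠ 0) (z : ℂ) {ι : Type*} {κ : Type} [Fintype ι] [Fintype κ]
    [DecidableEq κ] (x : ι → ℂ) (y : κ → ℂ) (hy : Good c y) :
    KIz c z x y = ∑ S : Finset κ, (-z) ^ (Sᶜ.card) * (∏ j ∈ S, ∏ i, fC c (x i) (y j)) *
      ∏ j ∈ S, ∏ k ∈ Sᶜ, fC c (y j) (y k) := by
  classical
  set N : Matrix κ κ ℂ := Matrix.of fun j k : κ => 1 / hC c (y j) (y k) with hN
  set a : κ → ℂ := fun j => (∏ i, fC c (x i) (y j)) *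
    (∏ i ∈ Finset.univ.erase j, fC c (y j) (y i)) with ha
  have h1 : KIz c z x y = Matrix.detRowAlternating
      ((fun j => a j • N j) + fun j => (-z) • (1 : Matrix κ κ ℂ) j) := by
    unfold KIz
    change Matrix.det _ = Matrix.det _
    congr 1
    ext j k
    by_cases hjk : j = k
    · simp [ha, hN, Matrix.one_apply, hjk]
      ring
    · simp [ha, hN, Matrix.one_apply, hjk]
      ring
  rw [h1, AlternatingMap.map_add_univ]
  refine Finset.sum_congr rfl fun S _ => ?_
  have h2 : (S.piecewise (fun j => a j • N j) fun j => (-z) • (1 : Matrix κ κ ℂ) j) =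
      Matrix.of fun j k => (if j ∈ S then a j else -z) *
        (Matrix.of (S.piecewise N.row (1 : Matrix κ κ ℂ).row)) j k := by
    ext j k
    by_cases hj : j ∈ S
    · have e : S.piecewise N.row (1 : Matrix κ κ ℂ).row j = N j :=
        Finset.piecewise_eq_of_mem _ _ _ hj
      rw [Finset.piecewise_eq_of_mem _ _ _ hj, Matrix.of_apply, Matrix.of_apply, e, if_pos hj]
      rfl
    · have e : S.piecewise N.row (1 : Matrix κ κ ℂ).row j = (1 : Matrix κ κ ℂ) j :=
        Finset.piecewise_eq_of_notMem _ _ _ hj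
      rw [Finset.piecewise_eq_of_notMem _ _ _ hj, Matrix.of_apply, Matrix.of_apply, e, if_neg hj]
      rfl
  rw [h2]
  change Matrix.det _ = _
  rw [Matrix.det_mul_column, Matrix.det_piecewise_one_eq_submatrix_det, Finset.prod_ite]
  have h3 : (Finset.univ.filter fun j => j ∈ S) = S := by ext; simp
  have h4 : (Finset.univ.filter fun j => j ∉ S) = Sᶜ := by ext; simp
  rw [h3, h4, Finset.prod_const, ha, Finset.prod_mul_distrib]
  have h5 : ∏ j ∈ S, ∏ i ∈ Finset.univ.erase j, fC c (y j) (y i) =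
      (∏ j ∈ S, ∏ k ∈ S.erase j, fC c (y j) (y k)) * ∏ j ∈ S, ∏ k ∈ Sᶜ, fC c (y j) (y k) := by
    rw [← Finset.prod_mul_distrib]
    refine Finset.prod_congr rfl fun j hj => ?_
    rw [← Finset.prod_union]
    · refine Finset.prod_congr ?_ fun _ _ => rfl
      ext k
      by_cases hk : k ∈ S
      · simp [hk]
      · simp [hk]; rintro rfl; exact hk hj
    · rw [Finset.disjoint_left]
      intro k hk
      simp at hk ⊢
      exact hk.2
  rw [h5]
  linear_combination (-z) ^ (Sᶜ.card) * (∏ j ∈ S, ∏ i, fC c (x i) (y j)) *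
      (∏ j ∈ S, ∏ k ∈ Sᶜ, fC c (y j) (y k)) * cauchy_fin c hc y hy S

/-- Vanishing of the determinant at `z = 1` without `x`-parameters. -/
lemma KIz_one_zero (c : ℂ) (hc : c ≠ 0) {κ : Type} [Fintype κ] [Nonempty κ]
    [DecidableEq κ] (x : Fin 0 → ℂ) (y : κ → ℂ) (hy : Good c y) :
    KIz c 1 x y = 0 := by
  unfold KIz
  rw [← Matrix.exists_vecMul_eq_zero_iff]
  refine ⟨fun _ => 1, fun h => ?_, ?_⟩
  · simpa using congrFun h (Classical.arbitrary κ)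
  ext k
  simp only [Matrix.vecMul, dotProduct, Matrix.of_apply, one_mul, Finset.univ_eq_empty,
    Finset.prod_empty, Pi.zero_apply, Finset.sum_add_distrib]
  have hinj : Set.InjOn y (Finset.univ : Finset κ) := by
    intro i _ j _ hij
    by_contra hne
    exact (hy i j hne).1 (sub_eq_zero.2 hij)
  set P : Polynomial ℂ := ∏ i ∈ Finset.univ.erase k,
    (Polynomial.X - Polynomial.C (y i - c)) with hP
  have hmon : P.Monic := Polynomial.monic_prod_of_monic _ _ fun i _ => Polynomial.monic_X_sub_C _
  have hdeg : P.degree = ((Finset.univ.erase k).card : ℕ) := by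
    rw [hP, Polynomial.degree_prod]
    simp only [Polynomial.degree_X_sub_C, Finset.sum_const, nsmul_eq_mul, mul_one]
  have hL := Lagrange.leadingCoeff_eq_sum (P := P) hinj (by
    rw [hdeg, ← Finset.card_erase_add_one (Finset.mem_univ k)]; norm_cast)
  rw [hmon.leadingCoeff] at hL
  have : ∀ j, (∏ i ∈ Finset.univ.erase j, fC c (y j) (y i)) / hC c (y j) (y k) =
      P.eval (y j) / ∏ i ∈ Finset.univ.erase j, (y j - y i) := by
    intro j
    have he : P.eval (y j) = ∏ i ∈ Finset.univ.erase k, (y j - y i + c) := by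
      rw [hP, Polynomial.eval_prod]
      refine Finset.prod_congr rfl fun i _ => ?_
      simp; ring
    have hne : y j - y k + c ≠ 0 := by
      by_cases hjk : j = k
      · simp [hjk, hc]
      · exact (hy j k hjk).2
    have h1 := Finset.mul_prod_erase Finset.univ (fun i => y j - y i + c) (Finset.mem_univ k)
    have h2 := Finset.mul_prod_erase Finset.univ (fun i => y j - y i + c) (Finset.mem_univ j)
    rw [← h1] at h2
    simp only [sub_self, zero_add] at h2
    unfold fC hC
    rw [he, Finset.prod_div_distrib]
    rw [div_div_eq_mul_div, div_mul_eq_mul_div, div_right_comm, mul_comm _ c, h2,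
      mul_div_cancel_left₀ _ hne]
  simp only [this]
  rw [← hL]
  simp

/-- Expansion for a subtuple. -/
lemma KIz_restr (c : ℂ) (hc : c ≠ 0) (z : ℂ) {ι : Type*} [Fintype ι] {l : ℕ}
    (x : ι → ℂ) (y : Fin l → ℂ) (hy : Good c y) (T : Finset (Fin l)) :
    KIz c z x (restr y T) = ∑ S ∈ T.powerset, (-z) ^ ((T \ S).card) *
      (∏ j ∈ S, ∏ i, fC c (x i) (y j)) * ∏ j ∈ S, ∏ k ∈ T \ S, fC c (y j) (y k) := by
  have hs : Good c (restr y T) := fun i j hij =>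
    hy _ _ (fun e => hij (Subtype.ext e))
  rw [KIz_expand c hc z x _ hs]
  refine Finset.sum_bij' (fun S _ => S.map (Function.Embedding.subtype _))
    (fun S _ => S.subtype (· ∈ T)) ?_ ?_ ?_ ?_ ?_
  · intro S _
    simp only [Finset.mem_powerset]
    exact Finset.map_subtype_subset S
  · intro S _; simp
  · intro S _; ext; simp
  · intro S hS
    rw [Finset.mem_powerset] at hS
    ext i; simp; exact fun h => hS h
  · intro S _
    have hc' : T \ S.map (Function.Embedding.subtype _) =
        Sᶜ.map (Function.Embedding.subtype _) := by
      ext i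
      by_cases hi : i ∈ T <;> simp [hi]
    rw [hc']
    simp only [Finset.prod_map, Finset.card_map]
    rfl

lemma key_sum (c : ℂ) (hc : c ≠ 0) {l : ℕ} (y : Fin l → ℂ) (hy : Good c y)
    (R : Finset (Fin l)) :
    ∑ D ∈ R.powerset, (-1 : ℂ) ^ D.card * ∏ j ∈ D, ∏ k ∈ R \ D, fC c (y j) (y k) =
      if R = ∅ then 1 else 0 := by
  split_ifs with h
  · subst h; simp
  · have hne : R.Nonempty := Finset.nonempty_iff_ne_empty.2 h
    haveI : Nonempty R := hne.to_subtype
    have hs : Good c (restr y R) := fun i j hij =>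
      hy _ _ (fun e => hij (Subtype.ext e))
    have h0 := KIz_one_zero c hc (fun _ => 0) (restr y R) hs
    rw [KIz_restr c hc 1 _ y hy] at h0
    have : ∑ D ∈ R.powerset, (-1 : ℂ) ^ D.card * ∏ j ∈ D, ∏ k ∈ R \ D, fC c (y j) (y k) =
        (-1) ^ R.card * 0 := by
      rw [← h0, Finset.mul_sum]
      refine Finset.sum_congr rfl fun D hD => ?_
      rw [Finset.mem_powerset] at hD
      have hcard := Finset.card_sdiff_add_card_eq_card hD
      rw [← hcard, pow_add]
      have : ((-1 : ℂ) ^ (R \ D).card) * (-1) ^ (R \ D).card = 1 := by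
        rw [← mul_pow]; simp
      simp
      linear_combination (- (-1) ^ D.card * ∏ j ∈ D, ∏ k ∈ R \ D, fC c (y j) (y k)) * this
    rw [this, mul_zero]

set_option maxHeartbeats 1000000 in
lemma main_sum {l : ℕ} (z1 z2 : ℂ) (F : Fin l → Fin l → ℂ) (U V : Fin l → ℂ)
    (hF : ∀ R : Finset (Fin l), ∑ D ∈ R.powerset, (-1 : ℂ) ^ D.card * ∏ j ∈ D, ∏ k ∈ R \ D, F j k =
      if R = ∅ then 1 else 0) :
    ∑ s : Finset (Fin l), z2 ^ s.card *
      (∑ A ∈ s.powerset, (-z1) ^ (s \ A).card * (∏ j ∈ A, U j) * ∏ j ∈ A, ∏ k ∈ s \ A, F j k) *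
      (∑ C ∈ sᶜ.powerset, (-z2) ^ (sᶜ \ C).card * (∏ j ∈ C, V j) *
        ∏ j ∈ C, ∏ k ∈ sᶜ \ C, F j k) *
      (∏ i ∈ sᶜ, ∏ j ∈ s, F i j) * (∏ j ∈ sᶜ, U j) =
    ∑ C : Finset (Fin l), (-(z1 * z2)) ^ Cᶜ.card * (∏ j ∈ C, U j * V j) *
      ∏ j ∈ C, ∏ k ∈ Cᶜ, F j k := by
  have hL : ∀ s : Finset (Fin l), z2 ^ s.card *
      (∑ A ∈ s.powerset, (-z1) ^ (s \ A).card * (∏ j ∈ A, U j) * ∏ j ∈ A, ∏ k ∈ s \ A, F j k) *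
      (∑ C ∈ sᶜ.powerset, (-z2) ^ (sᶜ \ C).card * (∏ j ∈ C, V j) *
        ∏ j ∈ C, ∏ k ∈ sᶜ \ C, F j k) *
      (∏ i ∈ sᶜ, ∏ j ∈ s, F i j) * (∏ j ∈ sᶜ, U j) =
      ∑ p ∈ s.powerset ×ˢ sᶜ.powerset, z2 ^ s.card *
        ((-z1) ^ (s \ p.1).card * (∏ j ∈ p.1, U j) * ∏ j ∈ p.1, ∏ k ∈ s \ p.1, F j k) *
        ((-z2) ^ (sᶜ \ p.2).card * (∏ j ∈ p.2, V j) *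
        ∏ j ∈ p.2, ∏ k ∈ sᶜ \ p.2, F j k) * (∏ i ∈ sᶜ, ∏ j ∈ s, F i j) * (∏ j ∈ sᶜ, U j) := by
    intro s
    rw [Finset.sum_product, mul_assoc (z2 ^ s.card), Finset.sum_mul_sum, Finset.mul_sum,
      Finset.sum_mul, Finset.sum_mul]
    refine Finset.sum_congr rfl fun A _ => ?_
    rw [Finset.mul_sum, Finset.sum_mul, Finset.sum_mul]
    refine Finset.sum_congr rfl fun C _ => ?_
    ring
  have hR : ∀ C : Finset (Fin l), (-(z1 * z2)) ^ Cᶜ.card * (∏ j ∈ C, U j * V j) *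
      ∏ j ∈ C, ∏ k ∈ Cᶜ, F j k = ∑ R ∈ Cᶜ.powerset, ∑ D ∈ R.powerset,
        (z2 ^ R.card * (-(z1 * z2)) ^ (Cᶜ \ R).card * (∏ j ∈ C, U j * V j) * (∏ j ∈ R, U j) *
          (∏ j ∈ R, ∏ k ∈ Cᶜ \ R, F j k) * (∏ j ∈ C, ∏ k ∈ Cᶜ, F j k)) *
        ((-1 : ℂ) ^ D.card * ∏ j ∈ D, ∏ k ∈ R \ D, F j k) := by
    intro C
    simp only [← Finset.mul_sum, hF]
    simp
  simp only [hL, hR]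
  rw [Finset.sum_sigma', Finset.sum_sigma', Finset.sum_sigma']
  refine Finset.sum_bij'
    (fun p _ => ⟨⟨p.2.2, p.2.1 ∪ (p.1ᶜ \ p.2.2)⟩, p.1ᶜ \ p.2.2⟩)
    (fun q _ => ⟨q.1.1ᶜ \ q.2, (q.1.2 \ q.2, q.1.1)⟩) ?_ ?_ ?_ ?_ ?_
  · rintro ⟨s, A, C⟩ h
    simp only [Finset.mem_sigma, Finset.mem_univ, Finset.mem_product, Finset.mem_powerset,
      true_and] at h ⊢
    clear hL hR hF
    constructor
    · intro i hi
      have := @h.1 i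
      have := @h.2 i
      simp at *
      tauto
    · intro i hi
      have := @h.1 i
      have := @h.2 i
      simp at *
      tauto
  · rintro ⟨⟨C, R⟩, D⟩ h
    simp only [Finset.mem_sigma, Finset.mem_univ, Finset.mem_product, Finset.mem_powerset,
      true_and] at h ⊢
    clear hL hR hF
    constructor
    · intro i hi
      have := @h.1 i
      have := @h.2 i
      simp at *
      tauto
    · intro i hi
      have := @h.1 i
      have := @h.2 i
      simp at *
      tauto
  · rintro ⟨s, A, C⟩ h
    simp only [Finset.mem_sigma, Finset.mem_univ, Finset.mem_product, Finset.mem_powerset,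
      true_and] at h
    have h1 : Cᶜ \ (sᶜ \ C) = s := by ext i; have := @h.1 i; have := @h.2 i; simp at *; tauto
    have h2 : (A ∪ sᶜ \ C) \ (sᶜ \ C) = A := by
      ext i; have := @h.1 i; have := @h.2 i; simp at *; tauto
    simp only [h1, h2]
  · rintro ⟨⟨C, R⟩, D⟩ h
    simp only [Finset.mem_sigma, Finset.mem_univ, Finset.mem_product, Finset.mem_powerset,
      true_and] at h
    have h1 : (Cᶜ \ D)ᶜ \ C = D := by ext i; have := @h.1 i; have := @h.2 i; simp at *; tauto
    have h2 : R \ D ∪ D = R := by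
      ext i; have := @h.1 i; have := @h.2 i; simp at *; tauto
    simp only [h1, h2]
  · rintro ⟨s, A, C⟩ h
    simp only [Finset.mem_sigma, Finset.mem_univ, Finset.mem_product, Finset.mem_powerset,
      true_and] at h
    obtain ⟨hA, hC⟩ := h
    dsimp only
    obtain ⟨B, hB⟩ : ∃ B, B = s \ A := ⟨_, rfl⟩
    obtain ⟨D, hD⟩ : ∃ D, D = sᶜ \ C := ⟨_, rfl⟩
    have dAB : Disjoint A B := by rw [hB]; exact Finset.disjoint_sdiff
    have dCD : Disjoint C D := by rw [hD]; exact Finset.disjoint_sdiff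
    have es : s = A ∪ B := by rw [hB]; exact (Finset.union_sdiff_of_subset hA).symm
    have esc : sᶜ = C ∪ D := by rw [hD]; exact (Finset.union_sdiff_of_subset hC).symm
    have dss : Disjoint (A ∪ B) (C ∪ D) := by rw [← es, ← esc]; exact disjoint_compl_right
    simp only [Finset.disjoint_union_left, Finset.disjoint_union_right] at dss
    obtain ⟨⟨dAC, dBC⟩, dAD, dBD⟩ := dss
    have eC : Cᶜ = (A ∪ D) ∪ B := by
      have : Cᶜ = s ∪ D := by
        rw [hD]; ext i; have := @hA i; have := @hC i; simp at *; tauto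
      rw [this, es]; ext i; simp; tauto
    have dADB : Disjoint (A ∪ D) B := by
      rw [Finset.disjoint_union_left]; exact ⟨dAB, dBD.symm⟩
    have e1 : Cᶜ \ (A ∪ D) = B := by
      rw [eC, Finset.union_sdiff_cancel_left dADB]
    have e2 : (A ∪ D) \ D = A := Finset.union_sdiff_cancel_right dAD
    rw [← hB, ← hD, e1, e2, esc, eC, es]
    simp only [Finset.prod_union dAB, Finset.prod_union dCD, Finset.prod_union dADB,
      Finset.prod_union dAD, Finset.card_union_of_disjoint dAB, Finset.card_union_of_disjoint dAD,
      Finset.prod_mul_distrib]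
    rw [neg_pow z1, neg_pow z2, neg_pow (z1 * z2), mul_pow, pow_add, pow_add]
    ring

lemma first_part (c : ℂ) (hc : c ≠ 0) (z1 z2 : ℂ) (l n m : ℕ)
    (ξ : Fin l → ℂ) (u : Fin n → ℂ) (v : Fin m → ℂ) (hy : Good c ξ) :
    (∑ s : Finset (Fin l),
        z2 ^ s.card * KIz c z1 u (restr ξ s) * KIz c z2 v (restr ξ sᶜ) *
          (∏ i ∈ sᶜ, ∏ j ∈ s, fC c (ξ i) (ξ j)) *
          (∏ j ∈ sᶜ, ∏ i, fC c (u i) (ξ j)))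
        = KIz c (z1 * z2) (Fin.append u v) ξ := by
  simp only [KIz_restr c hc _ _ ξ hy]
  rw [main_sum z1 z2 (fun i j => fC c (ξ i) (ξ j)) (fun j => ∏ i, fC c (u i) (ξ j))
    (fun j => ∏ i, fC c (v i) (ξ j)) (key_sum c hc ξ hy), KIz_expand c hc _ _ ξ hy]
  simp [Fin.prod_univ_add]

lemma fC_neg (c a b : ℂ) : fC (-c) a b = fC c b a := by
  unfold fC
  rw [← neg_div_neg_eq]
  congr 1 <;> ring

/-- Summation formula mixing two modified Izergin determinants into one
(Proposition `GenML` of the paper). -/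
theorem stmt16
    (c : ℂ) (hc : c ≠ 0) (z1 z2 : ℂ) (l n m : ℕ)
    (ξ : Fin l → ℂ) (u : Fin n → ℂ) (v : Fin m → ℂ)
    (hgen : Generic c (Fin.append (Fin.append u v) ξ)) :
    (∑ s : Finset (Fin l),
        z2 ^ s.card * KIz c z1 u (restr ξ s) * KIz c z2 v (restr ξ sᶜ) *
          (∏ i ∈ sᶜ, ∏ j ∈ s, fC c (ξ i) (ξ j)) *
          (∏ i, ∏ j ∈ sᶜ, fC c (u i) (ξ j)))
        = KIz c (z1 * z2) (Fin.append u v) ξ ∧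
      (∑ s : Finset (Fin l),
        z2 ^ s.card * KIzBar c z1 u (restr ξ s) * KIzBar c z2 v (restr ξ sᶜ) *
          (∏ i ∈ s, ∏ j ∈ sᶜ, fC c (ξ i) (ξ j)) *
          (∏ j ∈ sᶜ, ∏ i, fC c (ξ j) (u i)))
        = KIzBar c (z1 * z2) (Fin.append u v) ξ := by
  have hg : ∀ i j, i ≠ j → ξ i - ξ j ≠ 0 ∧ ξ i - ξ j ≠ c ∧ ξ i - ξ j ≠ -c := by
    intro i j hij
    have h := hgen (Fin.natAdd _ i) (Fin.natAdd _ j) (by simpa using hij)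
    simp only [Fin.append_right] at h
    exact ⟨h.1, h.2.1, h.2.2.1⟩
  have g1 : Good c ξ := fun i j hij =>
    ⟨(hg i j hij).1, fun h => (hg i j hij).2.2 (by linear_combination h)⟩
  have g2 : Good (-c) ξ := fun i j hij =>
    ⟨(hg i j hij).1, fun h => (hg i j hij).2.1 (by linear_combination h)⟩
  constructor
  · rw [← first_part c hc z1 z2 l n m ξ u v g1]
    refine Finset.sum_congr rfl fun s _ => ?_
    rw [Finset.prod_comm (s := Finset.univ)]
  · unfold KIzBar
    rw [← first_part (-c) (neg_ne_zero.2 hc) z1 z2 l n m ξ u v g2]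
    refine Finset.sum_congr rfl fun s _ => ?_
    simp only [fC_neg]
    rw [Finset.prod_comm (s := s)]
end
end
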